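/- arXiv:1302.2954 — 4 statements merged into one kernel-verified Lean document; each statement's English description precedes it below -/
import Mathlib

section
/- Let α, β, γ be positive real numbers and μ a real number, and let f : ℝ → ℝ be the generalized gamma probability density function f(x) = (γ β^{α/γ} / Γ(α/γ)) (x−μ)^{α−1} e^{−β(x−μ)^γ} for x > μ and f(x) = 0 for x ≤ μ. Then ∫_{μ}^{∞} f(x) dx = 1; equivalently, the measure on ℝ with density f with respect to Lebesgue measure is a probability measure. -/
/-!
The density vanishes off `(μ, ∞)`, so its integral there is its integral over the whole line, where
translation invariance of Lebesgue measure removes the shift `μ`. What remains is the classical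
formula `∫₀^∞ y ^ (α - 1) * exp (-β * y ^ γ) dy = β ^ (-α / γ) * Γ(α / γ) / γ`
(`integral_rpow_mul_exp_neg_mul_rpow`), whose value is the inverse of the normalizing constant.
Since the density is nonnegative, its Bochner integral is the total mass of the associated measure.
-/

open MeasureTheory Real

/-- The generalized gamma probability density function with parameters
`α, β, γ > 0` and shift `μ`. -/
noncomputable def genGammaPDF (α β γ μ : ℝ) (x : ℝ) : ℝ :=
  if μ < x then (γ * β ^ (α / γ) / Real.Gamma (α / γ)) * (x - μ) ^ (α - 1) *
    Real.exp (-β * (x - μ) ^ γ)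
  else 0

theorem genGammaPDF_nonneg {α β γ : ℝ} (μ : ℝ) (hα : 0 < α) (hβ : 0 < β) (hγ : 0 < γ) (x : ℝ) :
    0 ≤ genGammaPDF α β γ μ x := by
  unfold genGammaPDF
  split_ifs with h
  · have h1 : 0 < x - μ := sub_pos.2 h
    have h2 : 0 < Real.Gamma (α / γ) := Real.Gamma_pos_of_pos (by positivity)
    positivity
  · exact le_rfl

theorem integral_genGammaPDF {α β γ : ℝ} (μ : ℝ) (hα : 0 < α) (hβ : 0 < β) (hγ : 0 < γ) :
    ∫ x, genGammaPDF α β γ μ x = 1 := by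
  have hshift : ∀ x, genGammaPDF α β γ μ x = (Set.Ioi (0 : ℝ)).indicator
      (fun y => (γ * β ^ (α / γ) / Real.Gamma (α / γ)) *
        (y ^ (α - 1) * Real.exp (-β * y ^ γ))) (x - μ) := by
    intro x
    simp only [genGammaPDF, Set.indicator_apply, Set.mem_Ioi, sub_pos, mul_assoc]
  simp_rw [hshift]
  rw [integral_sub_right_eq_self, integral_indicator measurableSet_Ioi, integral_const_mul,
    integral_rpow_mul_exp_neg_mul_rpow hγ (by linarith) hβ, sub_add_cancel, neg_div,
    Real.rpow_neg hβ.le]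
  have hG : Real.Gamma (α / γ) ≠ 0 := (Real.Gamma_pos_of_pos (by positivity)).ne'
  have hb : β ^ (α / γ) ≠ 0 := (Real.rpow_pos_of_pos hβ _).ne'
  field_simp

/-- The generalized gamma density integrates to 1 on `(μ, ∞)`; equivalently,
the measure with this density w.r.t. Lebesgue measure is a probability measure. -/
theorem genGammaPDF_integral_eq_one (α β γ μ : ℝ) (hα : 0 < α) (hβ : 0 < β) (hγ : 0 < γ) :
    (∫ x in Set.Ioi μ, genGammaPDF α β γ μ x) = 1 ∧
    IsProbabilityMeasure
      (volume.withDensity (fun x => ENNReal.ofReal (genGammaPDF α β γ μ x))) := by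
  have hint := integral_genGammaPDF μ hα hβ hγ
  refine ⟨?_, ⟨?_⟩⟩
  · rw [setIntegral_eq_integral_of_forall_compl_eq_zero, hint]
    intro x hx
    exact if_neg hx
  · -- A non-integrable function would have Bochner integral `0`, not `1`.
    have hi : Integrable (genGammaPDF α β γ μ) :=
      Integrable.of_integral_ne_zero (by rw [hint]; exact one_ne_zero)
    rw [withDensity_apply _ MeasurableSet.univ, Measure.restrict_univ,
      ← ofReal_integral_eq_lintegral_ofReal hi
        (Filter.Eventually.of_forall (genGammaPDF_nonneg μ hα hβ hγ)),
      hint, ENNReal.ofReal_one]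
end

section
/- Let x > 0 and c > 0 be real numbers. Then (1/(2π)) ∫_{t ∈ ℝ} Γ(c + it) · x^{−(c + it)} dt = e^{−x}, where the integral is a Lebesgue integral of a complex-valued function of the real variable t, Γ is the complex Gamma function, and x^{−(c+it)} denotes the complex power of the positive real x. (This is the Mellin–Barnes representation e^{−x} = (1/(2πi)) ∫_L Γ(s) x^{−s} ds along the vertical line L = {c + it : t ∈ ℝ}.) -/
open MeasureTheory Real Complex

/-!
For `re s > 0` the function `Γ` is the Mellin transform of `y ↦ exp (-y)`, so the claim is Mellin
inversion (`mellinInv_mellin_eq`) on the line `re s = c`. The hypothesis that needs an argument is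
that `Γ` is integrable on that line. No Stirling asymptotics are necessary: the functional equation
gives `Γ(s) = Γ(s + 2) / (s (s + 1))`, the triangle inequality in Euler's integral gives
`‖Γ(s + 2)‖ ≤ Γ(c + 2)`, and so `‖Γ(c + it)‖ ≤ Γ(c + 2) / (c² + t²)`.
-/

/-- The triangle inequality applied to Euler's integral. -/
lemma norm_Gamma_le_Gamma_re {s : ℂ} (hs : 0 < s.re) :
    ‖Complex.Gamma s‖ ≤ Real.Gamma s.re := by
  rw [Complex.Gamma_eq_integral hs, Real.Gamma_eq_integral hs, Complex.GammaIntegral]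
  refine (norm_integral_le_integral_norm _).trans (le_of_eq ?_)
  refine setIntegral_congr_fun measurableSet_Ioi fun y hy => ?_
  simp only [norm_mul, Complex.norm_real, Real.norm_eq_abs, abs_of_pos (Real.exp_pos _)]
  rw [Complex.norm_cpow_eq_rpow_re_of_pos hy]
  simp

lemma norm_Gamma_vertical_le {c : ℝ} (hc : 0 < c) (t : ℝ) :
    ‖Complex.Gamma (c + t * Complex.I)‖ ≤ Real.Gamma (c + 2) * (c ^ 2 + t ^ 2)⁻¹ := by
  set s : ℂ := c + t * Complex.I with hs
  have hre : s.re = c := by simp [hs]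
  have him : s.im = t := by simp [hs]
  have hs0 : s ≠ 0 := fun h => by simp [h] at hre; linarith
  have hs1 : s + 1 ≠ 0 := fun h => by
    have := congrArg Complex.re h
    simp [hre] at this; linarith
  have hfe : Complex.Gamma (s + 2) = (s + 1) * (s * Complex.Gamma s) := by
    rw [← Complex.Gamma_add_one s hs0, ← Complex.Gamma_add_one _ hs1]
    ring_nf
  have hle : ‖Complex.Gamma (s + 2)‖ ≤ Real.Gamma (c + 2) := by
    have h := norm_Gamma_le_Gamma_re (s := s + 2) (by simp [hre]; linarith)
    simpa [hre] using h
  have hsq : ‖s‖ ^ 2 = c ^ 2 + t ^ 2 := by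
    rw [Complex.sq_norm, Complex.normSq_apply, hre, him]; ring
  have hmono : ‖s‖ ≤ ‖s + 1‖ := by
    refine (sq_le_sq₀ (norm_nonneg _) (norm_nonneg _)).1 ?_
    rw [Complex.sq_norm, Complex.sq_norm, Complex.normSq_apply, Complex.normSq_apply]
    simp only [Complex.add_re, Complex.add_im, Complex.one_re, Complex.one_im, hre, him]
    nlinarith
  have hpos : 0 < c ^ 2 + t ^ 2 := by positivity
  rw [← div_eq_mul_inv, le_div_iff₀ hpos, ← hsq]
  calc ‖Complex.Gamma s‖ * ‖s‖ ^ 2 = ‖s‖ * (‖s‖ * ‖Complex.Gamma s‖) := by ring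
    _ ≤ ‖s + 1‖ * (‖s‖ * ‖Complex.Gamma s‖) := by gcongr
    _ = ‖Complex.Gamma (s + 2)‖ := by rw [hfe, norm_mul, norm_mul]
    _ ≤ _ := hle

lemma continuous_Gamma_vertical {c : ℝ} (hc : 0 < c) :
    Continuous fun t : ℝ => Complex.Gamma (c + t * Complex.I) := by
  refine continuous_iff_continuousAt.2 fun t => ?_
  have h : ContinuousAt Complex.Gamma (c + t * Complex.I) := by
    refine (Complex.differentiableAt_Gamma _ fun m h => ?_).continuousAt
    have := congrArg Complex.re h
    simp at this
    linarith [(Nat.cast_nonneg m : (0 : ℝ) ≤ m)]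
  exact ContinuousAt.comp (f := fun t : ℝ => (c + t * Complex.I : ℂ)) h (by fun_prop)

lemma integrable_Gamma_vertical {c : ℝ} (hc : 0 < c) :
    Integrable fun t : ℝ => Complex.Gamma (c + t * Complex.I) := by
  have hint : Integrable fun t : ℝ => (c ^ 2 + t ^ 2)⁻¹ := by
    -- rescale `t ↦ (1 + t²)⁻¹` by `c`
    refine ((integrable_inv_one_add_sq.comp_div hc.ne').const_mul (c ^ 2)⁻¹).congr
      (Filter.Eventually.of_forall fun t => ?_)
    simp only
    rw [← mul_inv]
    congr 1
    field_simp
  exact (hint.const_mul (Real.Gamma (c + 2))).mono'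
    (continuous_Gamma_vertical hc).aestronglyMeasurable
    (Filter.Eventually.of_forall fun t => norm_Gamma_vertical_le hc t)

/-- Mellin–Barnes representation of the exponential:
for `x > 0` and `c > 0`,
`(1/(2π)) ∫_{t ∈ ℝ} Γ(c+it) x^{-(c+it)} dt = e^{-x}`,
i.e. `e^{-x} = (1/(2πi)) ∫_L Γ(s) x^{-s} ds` along the vertical line `L = {c+it}`. -/
theorem mellinBarnes_exp (x c : ℝ) (hx : 0 < x) (hc : 0 < c) :
    (1 / (2 * Real.pi) : ℂ) *
        ∫ t : ℝ, Complex.Gamma (c + t * Complex.I) *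
          (x : ℂ) ^ (-(c + t * Complex.I)) =
      Real.exp (-x) := by
  have hG (t : ℝ) : mellin (fun y : ℝ => (Real.exp (-y) : ℂ)) (c + t * Complex.I) =
      Complex.Gamma (c + t * Complex.I) := by
    rw [Complex.Gamma_eq_integral (by simpa using hc), Complex.GammaIntegral_eq_mellin]
  have hconv : MellinConvergent (fun y : ℝ => (Real.exp (-y) : ℂ)) c := by
    refine (Complex.GammaIntegral_convergent (s := c) (by simpa using hc)).congr_fun
      (fun y _ => ?_) measurableSet_Ioi
    simp [mul_comm]
  have hvert : VerticalIntegrable (mellin fun y : ℝ => (Real.exp (-y) : ℂ)) c := by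
    simpa only [VerticalIntegrable, hG] using integrable_Gamma_vertical hc
  have key := mellinInv_mellin_eq c (fun y : ℝ => (Real.exp (-y) : ℂ)) hx hconv hvert
    (by fun_prop)
  rw [← key, mellinInv]
  simp only [hG, smul_eq_mul, Complex.real_smul]
  push_cast
  simp only [mul_comm]
end

section
/- Let a and s be real numbers with s > 0 and s + a > 0. Then the Mellin transform of the upper incomplete gamma function satisfies ∫_0^∞ x^{s−1} Γ(a, x) dx = Γ(a + s)/s, where Γ(a, x) = ∫_x^∞ t^{a−1} e^{−t} dt. -/
/-!
The Mellin transform is the integral of `x^(s-1) t^(a-1) e^(-t)` over the wedge `0 < x < t`.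
The integrand is nonnegative, and integrating in `x` first gives `t^s / s`, which leaves
`(1/s) ∫_0^∞ t^(a+s-1) e^(-t) dt = Γ(a+s)/s`. As this is finite, Tonelli shows that the integrand
is integrable on the quadrant, and Fubini identifies the two iterated integrals.
-/

open MeasureTheory Real

/-- The upper incomplete gamma function `Γ(a, x) = ∫_x^∞ t^(a-1) e^(-t) dt`. -/
noncomputable def upperIncompleteGamma (a x : ℝ) : ℝ :=
  ∫ t in Set.Ioi x, t ^ (a - 1) * Real.exp (-t)

/-- The integrand of the double integral, extended by zero outside the wedge `x < t`. -/
noncomputable def wedgeIntegrand (a s : ℝ) (p : ℝ × ℝ) : ℝ :=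
  {q : ℝ × ℝ | q.1 < q.2}.indicator
    (fun q => q.1 ^ (s - 1) * (q.2 ^ (a - 1) * Real.exp (-q.2))) p

lemma measurable_wedgeIntegrand (a s : ℝ) : Measurable (wedgeIntegrand a s) := by
  unfold wedgeIntegrand
  refine Measurable.indicator ?_ (measurableSet_lt measurable_fst measurable_snd)
  fun_prop

lemma wedgeIntegrand_fst (a s t : ℝ) :
    (fun x => wedgeIntegrand a s (x, t)) =
      (Set.Iio t).indicator (fun x => x ^ (s - 1) * (t ^ (a - 1) * Real.exp (-t))) := by
  ext x
  simp [wedgeIntegrand, Set.indicator_apply]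

lemma wedgeIntegrand_snd (a s x : ℝ) :
    (fun t => wedgeIntegrand a s (x, t)) =
      (Set.Ioi x).indicator (fun t => x ^ (s - 1) * (t ^ (a - 1) * Real.exp (-t))) := by
  ext t
  simp [wedgeIntegrand, Set.indicator_apply]

lemma wedgeIntegrand_nonneg (a s : ℝ) {x t : ℝ} (hx : 0 < x) (ht : 0 < t) :
    0 ≤ wedgeIntegrand a s (x, t) := by
  unfold wedgeIntegrand
  rw [Set.indicator_apply]
  split_ifs <;> positivity

lemma integrableOn_wedgeIntegrand_fst (a : ℝ) {s t : ℝ} (hs : 0 < s) (ht : 0 < t) :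
    IntegrableOn (fun x => wedgeIntegrand a s (x, t)) (Set.Ioi 0) := by
  rw [wedgeIntegrand_fst, IntegrableOn, integrable_indicator_iff measurableSet_Iio, IntegrableOn,
    Measure.restrict_restrict measurableSet_Iio, Set.inter_comm, Set.Ioi_inter_Iio]
  refine Integrable.mul_const ?_ _
  have h := intervalIntegral.intervalIntegrable_rpow' (a := 0) (b := t)
    (show -1 < s - 1 by linarith)
  rw [intervalIntegrable_iff_integrableOn_Ioo_of_le ht.le] at h
  exact h

lemma integral_wedgeIntegrand_fst (a : ℝ) {s t : ℝ} (hs : 0 < s) (ht : 0 < t) :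
    ∫ x in Set.Ioi 0, wedgeIntegrand a s (x, t) =
      Real.exp (-t) * t ^ (a + s - 1) / s := by
  rw [wedgeIntegrand_fst, integral_indicator measurableSet_Iio,
    Measure.restrict_restrict measurableSet_Iio, Set.inter_comm, Set.Ioi_inter_Iio,
    integral_mul_const, ← integral_Ioc_eq_integral_Ioo,
    ← intervalIntegral.integral_of_le ht.le, integral_rpow (Or.inl (by linarith)),
    sub_add_cancel, Real.zero_rpow hs.ne', show a + s - 1 = s + (a - 1) by ring,
    Real.rpow_add ht]
  ring

lemma integral_wedgeIntegrand_snd (a s : ℝ) {x : ℝ} (hx : 0 < x) :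
    ∫ t in Set.Ioi 0, wedgeIntegrand a s (x, t) = x ^ (s - 1) * upperIncompleteGamma a x := by
  rw [wedgeIntegrand_snd, integral_indicator measurableSet_Ioi,
    Measure.restrict_restrict measurableSet_Ioi,
    Set.inter_eq_left.mpr (Set.Ioi_subset_Ioi hx.le), integral_const_mul, upperIncompleteGamma]

lemma integrable_wedgeIntegrand {a s : ℝ} (hs : 0 < s) (hsa : 0 < s + a) :
    Integrable (wedgeIntegrand a s)
      ((volume.restrict (Set.Ioi 0)).prod (volume.restrict (Set.Ioi 0))) := by
  rw [integrable_prod_iff' (measurable_wedgeIntegrand a s).aestronglyMeasurable]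
  constructor
  · filter_upwards [ae_restrict_mem measurableSet_Ioi] with t ht
    exact integrableOn_wedgeIntegrand_fst a hs ht
  · refine ((Real.GammaIntegral_convergent (s := a + s) (by linarith)).div_const s).congr ?_
    filter_upwards [ae_restrict_mem measurableSet_Ioi] with t ht
    rw [← integral_wedgeIntegrand_fst a hs ht]
    refine setIntegral_congr_fun measurableSet_Ioi fun x hx => ?_
    exact (Real.norm_of_nonneg (wedgeIntegrand_nonneg a s hx ht)).symm

/-- Mellin transform of the upper incomplete gamma function:
for `s > 0` and `s + a > 0`, `∫_0^∞ x^(s-1) Γ(a, x) dx = Γ(a+s)/s`. -/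
theorem mellin_upperIncompleteGamma (a s : ℝ) (hs : 0 < s) (hsa : 0 < s + a) :
    ∫ x in Set.Ioi (0 : ℝ), x ^ (s - 1) * upperIncompleteGamma a x =
      Real.Gamma (a + s) / s := by
  calc ∫ x in Set.Ioi (0 : ℝ), x ^ (s - 1) * upperIncompleteGamma a x
      = ∫ x in Set.Ioi (0 : ℝ), ∫ t in Set.Ioi (0 : ℝ), wedgeIntegrand a s (x, t) :=
        setIntegral_congr_fun measurableSet_Ioi fun x hx =>
          (integral_wedgeIntegrand_snd a s hx).symm
    _ = ∫ t in Set.Ioi (0 : ℝ), ∫ x in Set.Ioi (0 : ℝ), wedgeIntegrand a s (x, t) :=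
        integral_integral_swap (f := fun x t => wedgeIntegrand a s (x, t))
          (integrable_wedgeIntegrand hs hsa)
    _ = ∫ t in Set.Ioi (0 : ℝ), Real.exp (-t) * t ^ (a + s - 1) / s :=
        setIntegral_congr_fun measurableSet_Ioi fun t ht => integral_wedgeIntegrand_fst a hs ht
    _ = Real.Gamma (a + s) / s := by
        rw [integral_div, Real.Gamma_eq_integral (by linarith)]
end

section
/- Let a, b, s be real numbers with a > 0, 0 < s < a, and s > b − 1, and for x > 0 define the Tricomi confluent hypergeometric function by its integral representation U(a, b, x) = (1/Γ(a)) ∫_0^∞ e^{−x t} t^{a−1} (1 + t)^{b−a−1} dt. Then the Mellin transform of U(a, b, ·) satisfies ∫_0^∞ x^{s−1} U(a, b, x) dx = Γ(s) Γ(1 − b + s) Γ(a − s) / (Γ(a) Γ(a − b + 1)). -/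
/-!
Two applications of one fact give the formula: the Mellin transform at `s` of the Laplace
transform of `g` is `Γ(s) ∫ t^(-s) g(t) dt` (`mellin_laplace`, by Fubini and the scaled Gamma
integral in `x`). Since `Γ(a) U(a, b, ·)` is the Laplace transform of
`t^(a-1) (1+t)^(b-a-1)`, this reduces the theorem to the Beta integral over the half-line,
`∫ t^(p-1) (1+t)^(-(p+q)) dt = Γ(p) Γ(q) / Γ(p+q)` with `p = a - s`, `q = 1 - b + s`. That integral
comes from the same fact (`beta_prime_integral`), because `Γ(p+q) (1+t)^(-(p+q))` is the Laplace
transform of `y^(p+q-1) e^(-y)`.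
-/

open MeasureTheory Real

/-- The Tricomi confluent hypergeometric function, defined for `a > 0` and `x > 0`
by the integral representation `U(a,b,x) = (1/Γ(a)) ∫_0^∞ e^{-xt} t^(a-1) (1+t)^(b-a-1) dt`. -/
noncomputable def tricomiU (a b x : ℝ) : ℝ :=
  (1 / Real.Gamma a) * ∫ t in Set.Ioi (0 : ℝ),
    Real.exp (-x * t) * t ^ (a - 1) * (1 + t) ^ (b - a - 1)

/-- A nonzero Bochner integral forces integrability, so the positive Gamma value suffices. -/
lemma integrableOn_gamma_kernel {p c : ℝ} (hp : 0 < p) (hc : 0 < c) :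
    IntegrableOn (fun x : ℝ => x ^ (p - 1) * Real.exp (-(c * x))) (Set.Ioi 0) := by
  apply Integrable.of_integral_ne_zero
  rw [Real.integral_rpow_mul_exp_neg_mul_Ioi hp hc]
  have := Real.Gamma_pos_of_pos hp
  positivity

/-- The Mellin transform of the Laplace transform of `g`. Convergence of the right-hand side is
what makes Fubini applicable. -/
lemma mellin_laplace {s : ℝ} (hs : 0 < s) {g : ℝ → ℝ} (hg : Measurable g)
    (hi : IntegrableOn (fun t => t ^ (-s) * g t) (Set.Ioi 0)) :
    ∫ x in Set.Ioi (0 : ℝ), x ^ (s - 1) * ∫ t in Set.Ioi (0 : ℝ), Real.exp (-x * t) * g t =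
      Real.Gamma s * ∫ t in Set.Ioi (0 : ℝ), t ^ (-s) * g t := by
  have key : ∀ t : ℝ, 0 < t → ∫ x in Set.Ioi (0 : ℝ), x ^ (s - 1) * Real.exp (-(t * x)) =
      Real.Gamma s * t ^ (-s) := by
    intro t ht
    rw [Real.integral_rpow_mul_exp_neg_mul_Ioi hs ht, one_div, Real.inv_rpow ht.le,
      Real.rpow_neg ht.le, mul_comm]
  have hF : Integrable (Function.uncurry fun x t : ℝ =>
      x ^ (s - 1) * Real.exp (-(t * x)) * g t)
      ((volume.restrict (Set.Ioi 0)).prod (volume.restrict (Set.Ioi 0))) := by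
    rw [integrable_prod_iff']
    · constructor
      · filter_upwards [ae_restrict_mem measurableSet_Ioi] with t ht
        exact (integrableOn_gamma_kernel hs ht).mul_const (g t)
      · refine (hi.norm.const_mul (Real.Gamma s)).congr ?_
        filter_upwards [ae_restrict_mem measurableSet_Ioi] with t ht
        have ht : 0 < t := ht
        calc Real.Gamma s * ‖t ^ (-s) * g t‖ = Real.Gamma s * t ^ (-s) * ‖g t‖ := by
              rw [norm_mul, Real.norm_of_nonneg (Real.rpow_nonneg ht.le _), mul_assoc]
          _ = ∫ x in Set.Ioi (0 : ℝ), x ^ (s - 1) * Real.exp (-(t * x)) * ‖g t‖ := by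
              rw [integral_mul_const, key t ht]
          _ = _ := by
              refine setIntegral_congr_fun measurableSet_Ioi fun x hx => ?_
              have hx : 0 < x := hx
              simp only [Function.uncurry]
              have hk : 0 ≤ x ^ (s - 1) * Real.exp (-(t * x)) := by positivity
              rw [norm_mul _ (g t), Real.norm_of_nonneg hk]
    · apply Measurable.aestronglyMeasurable
      unfold Function.uncurry
      fun_prop
  calc _ = ∫ x in Set.Ioi (0 : ℝ), ∫ t in Set.Ioi (0 : ℝ),
        x ^ (s - 1) * Real.exp (-(t * x)) * g t := by
        refine integral_congr_ae (Filter.Eventually.of_forall fun x => ?_)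
        simp only
        rw [← integral_const_mul]
        congr 1 with t
        rw [mul_assoc, neg_mul, mul_comm x t]
    _ = ∫ t in Set.Ioi (0 : ℝ), ∫ x in Set.Ioi (0 : ℝ),
        x ^ (s - 1) * Real.exp (-(t * x)) * g t := integral_integral_swap hF
    _ = ∫ t in Set.Ioi (0 : ℝ), Real.Gamma s * (t ^ (-s) * g t) := by
        refine setIntegral_congr_fun measurableSet_Ioi fun t ht => ?_
        rw [integral_mul_const, key t ht, mul_assoc]
    _ = _ := integral_const_mul _ _

/-- The Beta integral in its form over the half-line. -/
lemma beta_prime_integral {p q : ℝ} (hp : 0 < p) (hq : 0 < q) :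
    ∫ t in Set.Ioi (0 : ℝ), t ^ (p - 1) * (1 + t) ^ (-(p + q)) =
      Real.Gamma p * Real.Gamma q / Real.Gamma (p + q) := by
  have hpq : 0 < p + q := by positivity
  have hG := Real.Gamma_pos_of_pos hpq
  have e : Set.EqOn (fun y : ℝ => y ^ (-p) * (y ^ (p + q - 1) * Real.exp (-y)))
      (fun y => Real.exp (-y) * y ^ (q - 1)) (Set.Ioi 0) := by
    intro y hy
    simp only
    rw [← mul_assoc, ← Real.rpow_add hy, mul_comm]
    ring_nf
  have h := mellin_laplace hp (g := fun y => y ^ (p + q - 1) * Real.exp (-y)) (by fun_prop)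
    ((integrableOn_congr_fun e measurableSet_Ioi).2 (Real.GammaIntegral_convergent hq))
  rw [setIntegral_congr_fun measurableSet_Ioi e, ← Real.Gamma_eq_integral hq] at h
  rw [eq_div_iff hG.ne', ← h, ← integral_mul_const]
  refine setIntegral_congr_fun measurableSet_Ioi fun t ht => ?_
  have ht1 : 0 < 1 + t := by have : 0 < t := ht; positivity
  rw [mul_assoc]
  congr 1
  rw [Real.rpow_neg ht1.le, ← Real.inv_rpow ht1.le, ← one_div,
    ← Real.integral_rpow_mul_exp_neg_mul_Ioi hpq ht1]
  congr 1 with y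
  rw [mul_left_comm, ← Real.exp_add]
  ring_nf

/-- Mellin transform of the Tricomi function: for `a > 0`, `0 < s < a`, `s > b - 1`,
`∫_0^∞ x^(s-1) U(a,b,x) dx = Γ(s) Γ(1-b+s) Γ(a-s) / (Γ(a) Γ(a-b+1))`. -/
theorem mellin_tricomiU (a b s : ℝ) (ha : 0 < a) (hs0 : 0 < s) (hsa : s < a)
    (hsb : b - 1 < s) :
    ∫ x in Set.Ioi (0 : ℝ), x ^ (s - 1) * tricomiU a b x =
      Real.Gamma s * Real.Gamma (1 - b + s) * Real.Gamma (a - s) /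
        (Real.Gamma a * Real.Gamma (a - b + 1)) := by
  have hp : 0 < a - s := sub_pos.2 hsa
  have hq : 0 < 1 - b + s := by linarith
  have hr : a - s + (1 - b + s) = a - b + 1 := by ring
  have hbeta := beta_prime_integral hp hq
  rw [hr] at hbeta
  have hi : IntegrableOn (fun t : ℝ => t ^ (a - s - 1) * (1 + t) ^ (-(a - b + 1)))
      (Set.Ioi 0) := by
    apply Integrable.of_integral_ne_zero
    rw [hbeta]
    have h1 := Real.Gamma_pos_of_pos hp
    have h2 := Real.Gamma_pos_of_pos hq
    have h3 : 0 < Real.Gamma (a - b + 1) := Real.Gamma_pos_of_pos (by linarith)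
    positivity
  have e : Set.EqOn (fun t : ℝ => t ^ (-s) * (t ^ (a - 1) * (1 + t) ^ (b - a - 1)))
      (fun t => t ^ (a - s - 1) * (1 + t) ^ (-(a - b + 1))) (Set.Ioi 0) := by
    intro t ht
    simp only
    rw [← mul_assoc, ← Real.rpow_add ht]
    ring_nf
  have h := mellin_laplace hs0 (g := fun t => t ^ (a - 1) * (1 + t) ^ (b - a - 1)) (by fun_prop)
    ((integrableOn_congr_fun e measurableSet_Ioi).2 hi)
  rw [setIntegral_congr_fun measurableSet_Ioi e, hbeta] at h
  simp only [tricomiU, mul_assoc, mul_left_comm _ (1 / Real.Gamma a)]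
  rw [integral_const_mul, h]
  field_simp
end
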